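/- Under the interference-alignment hypotheses, set t = ⌈r²/l⌉ and define λ₀ = r if t = r, and λ₀ = t + 1 + ⌊log_{r/(r−1)}((r−t)·l/r)⌋ if 1 ≤ t < r. If λ₀ < k, then r^{⌈k/λ₀⌉} ≤ l²; consequently k ≤ 2λ₀ · log_r(l). -/

import Mathlib

namespace MSRAux
set_option linter.unusedSectionVars false
open Module

variable {K V : Type*} [Field K] [AddCommGroup V] [Module K V] [FiniteDimensional K V]

theorem indep_count {M N : Type*} [AddCommGroup M] [Module K M] [FiniteDimensional K M]
    [AddCommGroup N] [Module K N] [FiniteDimensional K N] {r : ℕ}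
    (g : Fin r → (M →ₗ[K] N)) (D : Submodule K M) (E : Submodule K N)
    (hDE : ∀ u, ∀ x ∈ D, g u x ∈ E)
    (hind : ∀ x : Fin r → M, (∀ u, x u ∈ D) → ∑ u, g u (x u) = 0 → ∀ u, x u = 0) :
    r * finrank K D ≤ finrank K E := by
  let f : (Fin r → D) →ₗ[K] E :=
    ∑ u, ((g u).restrict (hDE u)) ∘ₗ LinearMap.proj u
  have hf : Function.Injective f := by
    rw [injective_iff_map_eq_zero]
    intro x hx
    have h0 : ∑ u, g u (x u : M) = 0 := by
      have := congrArg (Subtype.val) hx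
      simpa [f, LinearMap.restrict_apply] using this
    have := hind (fun u => (x u : M)) (fun u => (x u).2) h0
    funext u
    exact Subtype.ext (this u)
  have := LinearMap.finrank_le_finrank_of_injective hf
  rwa [Module.finrank_pi_fintype, Finset.sum_const, Finset.card_univ, Fintype.card_fin,
    smul_eq_mul] at this

variable {ι : Type*} [DecidableEq ι]

/-- Endomorphisms preserving the `U i`, `i ∈ A`, and killing the `U i`, `i ∈ Z`. -/
def G (U : ι → Submodule K V) (A Z : Finset ι) : Submodule K (V →ₗ[K] V) where
  carrier := {φ | (∀ i ∈ A, ∀ x ∈ U i, φ x ∈ U i) ∧ (∀ i ∈ Z, ∀ x ∈ U i, φ x = 0)}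
  zero_mem' := ⟨fun i _ x _ => by simp, fun i _ x _ => by simp⟩
  add_mem' := by
    rintro a b ⟨h1, h2⟩ ⟨h3, h4⟩
    refine ⟨fun i hi x hx => add_mem (h1 i hi x hx) (h3 i hi x hx), fun i hi x hx => ?_⟩
    simp [h2 i hi x hx, h4 i hi x hx]
  smul_mem' := by
    rintro a b ⟨h1, h2⟩
    refine ⟨fun i hi x hx => Submodule.smul_mem _ _ (h1 i hi x hx), fun i hi x hx => ?_⟩
    simp [h2 i hi x hx]

theorem mem_G (U : ι → Submodule K V) (A Z : Finset ι) (φ : V →ₗ[K] V) :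
    φ ∈ G U A Z ↔ (∀ i ∈ A, ∀ x ∈ U i, φ x ∈ U i) ∧ (∀ i ∈ Z, ∀ x ∈ U i, φ x = 0) := Iff.rfl

/-- restriction to `U b`. -/
def R (U : ι → Submodule K V) (b : ι) : (V →ₗ[K] V) →ₗ[K] (U b →ₗ[K] V) :=
  LinearMap.lcomp K V (U b).subtype

theorem R_apply (U : ι → Submodule K V) (b : ι) (φ : V →ₗ[K] V) (x : U b) :
    R U b φ x = φ x := rfl

theorem finrank_split (U : ι → Submodule K V) (A Z : Finset ι) (b : ι) :
    finrank K (G U A Z) = finrank K ((G U A Z).map (R U b)) + finrank K (G U A (insert b Z)) := by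
  have h := LinearMap.finrank_range_add_finrank_ker ((R U b).domRestrict (G U A Z))
  rw [LinearMap.range_domRestrict] at h
  rw [← h]
  congr 1
  have : G U A (insert b Z) =
      (LinearMap.ker ((R U b).domRestrict (G U A Z))).map (G U A Z).subtype := by
    ext φ
    simp only [mem_G, Submodule.mem_map, LinearMap.mem_ker, Submodule.subtype_apply,
      Subtype.exists, LinearMap.domRestrict_apply]
    constructor
    · rintro ⟨h1, h2⟩
      refine ⟨φ, ⟨h1, fun i hi => h2 i (Finset.mem_insert_of_mem hi)⟩, ?_, rfl⟩
      ext x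
      simpa [R_apply] using h2 b (Finset.mem_insert_self _ _) x x.2
    · rintro ⟨ψ, ⟨h1, h2⟩, h3, rfl⟩
      refine ⟨h1, fun i hi x hx => ?_⟩
      rcases Finset.mem_insert.1 hi with rfl | hi
      · exact LinearMap.congr_fun h3 ⟨x, hx⟩
      · exact h2 i hi x hx
  rw [this]
  exact ((Submodule.equivMapOfInjective _ (Submodule.subtype_injective _) _).finrank_eq)

section
variable {r : ℕ} (U : ι → Submodule K V) (c : Fin r → ι → (V →ₗ[K] V))

theorem quot_step
    (hfix : ∀ i j, j ≠ i → ∀ u, ∀ x ∈ U i, c u j x ∈ U i)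
    (hind : ∀ j, ∀ x : Fin r → V, (∀ u, x u ∈ U j) → ∑ u, c u j (x u) = 0 → ∀ u, x u = 0)
    (A Z A' : Finset ι) (b : ι) (hb : b ∉ A) (hA : A ⊆ A') (hbA : b ∈ A') :
    r * finrank K ((G U A' Z).map (R U b)) ≤ finrank K ((G U A Z).map (R U b)) := by
  apply indep_count (fun u => LinearMap.compRight K (M := U b) (c u b))
  · rintro u _ ⟨φ, hφ, rfl⟩
    refine ⟨c u b ∘ₗ φ, ⟨fun i hi x hx => ?_, fun i hi x hx => ?_⟩, ?_⟩
    · exact hfix i b (fun h => hb (h ▸ hi)) u _ (hφ.1 i (hA hi) x hx)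
    · simp [hφ.2 i hi x hx]
    · rfl
  · intro ψ hψ h0 u
    ext x
    refine hind b (fun u => ψ u x) ?_ ?_ u
    · intro v
      obtain ⟨φ, hφ, h⟩ := hψ v
      simp only [← h, R_apply]
      exact hφ.1 b hbA x x.2
    · simpa using LinearMap.congr_fun h0 x

theorem block
    (hfix : ∀ i j, j ≠ i → ∀ u, ∀ x ∈ U i, c u j x ∈ U i)
    (hind : ∀ j, ∀ x : Fin r → V, (∀ u, x u ∈ U j) → ∑ u, c u j (x u) = 0 → ∀ u, x u = 0)
    (B : Finset ι) : ∀ (A Z : Finset ι), Disjoint A B →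
    (B.sup U ⊔ Z.sup U = ⊤) → r * finrank K (G U (A ∪ B) Z) ≤ finrank K (G U A Z) := by
  induction B using Finset.induction_on with
  | empty =>
    intro A Z _ h
    simp only [Finset.sup_empty, bot_sup_eq] at h
    have : G U A Z = ⊥ := by
      rw [eq_bot_iff]
      intro φ hφ
      have : (⊤ : Submodule K V) ≤ LinearMap.ker φ := by
        rw [← h]
        exact Finset.sup_le fun i hi x hx => hφ.2 i hi x hx
      rw [Submodule.mem_bot]
      ext x
      exact this (Submodule.mem_top : x ∈ ⊤)
    rw [Finset.union_empty, this]
    simp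
  | insert b B hbB ih =>
    intro A Z hd h
    rw [Finset.disjoint_insert_right] at hd
    have h1 := ih A (insert b Z) hd.2 (by
      rw [← h, Finset.sup_insert, Finset.sup_insert, ← sup_assoc, sup_comm (B.sup U)])
    have h2 := quot_step U c hfix hind A Z (A ∪ insert b B) b hd.1
      Finset.subset_union_left (by simp)
    have h3 : G U (A ∪ insert b B) (insert b Z) = G U (A ∪ B) (insert b Z) := by
      ext φ
      simp only [mem_G]
      constructor
      · rintro ⟨h1, h2⟩
        exact ⟨fun i hi => h1 i (by simp at hi ⊢; tauto), h2⟩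
      · rintro ⟨h1, h2⟩
        refine ⟨fun i hi x hx => ?_, h2⟩
        by_cases hib : i = b
        · subst hib
          rw [h2 i (by simp) x hx]; simp
        · exact h1 i (by simp at hi ⊢; tauto) x hx
    rw [finrank_split U _ Z b, h3, finrank_split U A Z b, mul_add]
    exact add_le_add h2 h1

theorem last
    (hfix : ∀ i j, j ≠ i → ∀ u, ∀ x ∈ U i, c u j x ∈ U i)
    (hind : ∀ j, ∀ x : Fin r → V, (∀ u, x u ∈ U j) → ∑ u, c u j (x u) = 0 → ∀ u, x u = 0)
    (A : Finset ι) (j : ι) (hj : j ∉ A) (hU : U j ≠ ⊥) :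
    r ≤ finrank K (G U A ∅) := by
  have h2 := quot_step U c hfix hind A ∅ (insert j A) j hj (by simp) (by simp)
  have h3 := finrank_split U A ∅ j
  have : 0 < finrank K ((G U (insert j A) ∅).map (R U j)) := by
    rw [Module.finrank_pos_iff_exists_ne_zero]
    obtain ⟨x, hx, hx0⟩ := (Submodule.ne_bot_iff _).1 hU
    refine ⟨⟨R U j LinearMap.id, LinearMap.id, ⟨fun i _ x hx => hx, by simp⟩, rfl⟩, ?_⟩
    intro h
    have := congrArg Subtype.val h
    exact hx0 (LinearMap.congr_fun this ⟨x, hx⟩)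
  nlinarith

theorem blocks
    (hfix : ∀ i j, j ≠ i → ∀ u, ∀ x ∈ U i, c u j x ∈ U i)
    (hind : ∀ j, ∀ x : Fin r → V, (∀ u, x u ∈ U j) → ∑ u, c u j (x u) = 0 → ∀ u, x u = 0)
    {m : ℕ} (hspan : ∀ A : Finset ι, A.card = m → A.sup U = ⊤) (n : ℕ) :
    ∀ A : Finset ι, A.card = n * m → r ^ n * finrank K (G U A ∅) ≤ finrank K V ^ 2 := by
  induction n with
  | zero =>
    intro A hA
    have := Submodule.finrank_le (G U A ∅)
    rw [Module.finrank_linearMap] at this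
    simpa [sq] using this
  | succ n ih =>
    intro A hA
    obtain ⟨B, hBA, hB⟩ := Finset.exists_subset_card_eq (s := A) (n := m) (by rw [hA]; nlinarith)
    have h1 := ih (A \ B) (by rw [Finset.card_sdiff_of_subset hBA, hA, hB]; simp [add_mul])
    have h2 := block U c hfix hind B (A \ B) ∅ Finset.sdiff_disjoint (by simp [hspan B hB])
    rw [Finset.sdiff_union_of_subset hBA] at h2
    calc _ = r ^ n * (r * finrank K (G U A ∅)) := by ring
      _ ≤ _ := (Nat.mul_le_mul_left _ h2).trans h1

theorem grow
    (hfix : ∀ i j, j ≠ i → ∀ u, ∀ x ∈ U i, c u j x ∈ U i)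
    (hind : ∀ j, ∀ x : Fin r → V, (∀ u, x u ∈ U j) → ∑ u, c u j (x u) = 0 → ∀ u, x u = 0)
    (A : Finset ι) (j : ι) (hj : j ∉ A) : ∃ d : ℕ,
    finrank K ((insert j A).sup U : Submodule K V) + d = finrank K (A.sup U : Submodule K V) + finrank K (U j) ∧
    r * d ≤ finrank K (A.sup U : Submodule K V) := by
  refine ⟨finrank K (U j ⊓ A.sup U : Submodule K V), ?_, ?_⟩
  · rw [Finset.sup_insert, Submodule.finrank_sup_add_finrank_inf_eq, add_comm]
  · apply indep_count (fun u => c u j)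
    · intro u x hx
      have : A.sup U ≤ (A.sup U).comap (c u j) := by
        refine Finset.sup_le fun i hi x hx => ?_
        have hle : U i ≤ A.sup U := Finset.le_sup hi
        exact hle (hfix i j (fun h => hj (h ▸ hi)) u x hx)
      exact this hx.2
    · intro x hx h
      exact hind j x (fun u => (hx u).1) h

theorem grow_small
    (hfix : ∀ i j, j ≠ i → ∀ u, ∀ x ∈ U i, c u j x ∈ U i)
    (hind : ∀ j, ∀ x : Fin r → V, (∀ u, x u ∈ U j) → ∑ u, c u j (x u) = 0 → ∀ u, x u = 0)
    {β t : ℕ} (hβ : ∀ j, finrank K (U j) = β) (ht : ∀ m < t, m * β < r)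
    (A : Finset ι) (hA : A.card ≤ t) : finrank K (A.sup U : Submodule K V) = A.card * β := by
  induction A using Finset.induction_on with
  | empty => simp
  | insert j A hj ih =>
    rw [Finset.card_insert_of_notMem hj] at hA ⊢
    obtain ⟨d, h1, h2⟩ := grow U c hfix hind A j hj
    rw [ih (by omega), hβ] at h1
    rw [ih (by omega)] at h2
    have := ht A.card (by omega)
    have : d = 0 := by
      by_contra h
      have : 1 ≤ d := by omega
      nlinarith
    subst this
    linarith

theorem grow_large
    (hfix : ∀ i j, j ≠ i → ∀ u, ∀ x ∈ U i, c u j x ∈ U i)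
    (hind : ∀ j, ∀ x : Fin r → V, (∀ u, x u ∈ U j) → ∑ u, c u j (x u) = 0 → ∀ u, x u = 0)
    {β t : ℕ} (hr : 2 ≤ r) (hβ : ∀ j, finrank K (U j) = β)
    (ht : ∀ m < t, m * β < r) (m : ℕ) :
    ∀ (A : Finset ι), A.card = t + m →
     ((r * β : ℝ) - finrank K (A.sup U : Submodule K V)) ≤ (((r : ℝ) - 1) / r) ^ m * ((r - t) * β) := by
  induction m with
  | zero =>
    intro A hA
    rw [grow_small U c hfix hind hβ ht A (by omega), hA]
    push_cast
    apply le_of_eq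
    ring
  | succ m ih =>
    intro A hA
    obtain ⟨j, hj⟩ := Finset.card_pos.1 (show 0 < A.card by omega)
    obtain ⟨d, h1, h2⟩ := grow U c hfix hind (A.erase j) j (by simp)
    rw [Finset.insert_erase hj, hβ] at h1
    have h3 := ih (A.erase j) (by rw [Finset.card_erase_of_mem hj]; omega)
    set w := finrank K ((A.erase j).sup U : Submodule K V)
    set w' := finrank K (A.sup U : Submodule K V)
    have h1' : (w' : ℝ) + d = w + β := by exact_mod_cast h1
    have h2' : (r : ℝ) * d ≤ w := by exact_mod_cast h2
    have hr0 : (2 : ℝ) ≤ r := by exact_mod_cast hr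
    have h4 : (r * β : ℝ) - w' ≤ ((r : ℝ) - 1) / r * (r * β - w) := by
      rw [div_mul_eq_mul_div, le_div_iff₀ (by linarith)]
      have : (w' : ℝ) = w + β - d := by linarith
      rw [this]
      nlinarith
    rw [pow_succ', mul_assoc]
    exact h4.trans (mul_le_mul_of_nonneg_left h3 (div_nonneg (by linarith) (by linarith)))
end

theorem count_ge {M N : Type*} [AddCommGroup M] [Module K M] [FiniteDimensional K M]
    [AddCommGroup N] [Module K N] {r : ℕ}
    (g : Fin r → (M →ₗ[K] N)) (D : Submodule K M)
    (h : (⨆ u, D.map (g u)) = ⊤) : finrank K N ≤ r * finrank K D := by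
  let f : (Fin r → D) →ₗ[K] N :=
    ∑ u, ((g u).domRestrict D) ∘ₗ LinearMap.proj u
  have hf : LinearMap.range f = ⊤ := by
    rw [eq_top_iff, ← h]
    refine iSup_le fun u => ?_
    rintro _ ⟨x, hx, rfl⟩
    refine ⟨Pi.single u ⟨x, hx⟩, ?_⟩
    simp only [f, LinearMap.sum_apply, LinearMap.comp_apply, LinearMap.proj_apply]
    rw [Finset.sum_eq_single u]
    · simp
    · intro v _ hv
      simp [Pi.single_eq_of_ne hv]
    · simp
  have := LinearMap.finrank_le_finrank_of_surjective (LinearMap.range_eq_top.1 hf)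
  rwa [Module.finrank_pi_fintype, Finset.sum_const, Finset.card_univ, Fintype.card_fin,
    smul_eq_mul] at this

theorem span_mul {m l : ℕ} (S : Matrix (Fin m) (Fin l) K) (C : Matrix (Fin l) (Fin l) K) :
    Submodule.span K (Set.range (S * C)) =
      (Submodule.span K (Set.range S)).map C.vecMulLinear := by
  have h : Set.image C.vecMulLinear (Set.range (fun i => S i) : Set (Fin l → K)) =
      Set.range (fun i => (S * C) i) := by
    rw [← Set.range_comp]
    rfl
  rw [Submodule.map_span]
  exact congrArg _ h.symm
end MSRAux



theorem stmt_15 {𝔽 : Type*} [Field 𝔽] (k r l : ℕ)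
    (hk : 0 < k) (hr : 2 ≤ r) (hl : 0 < l) (hrl : r ∣ l)
    (S : Fin k → Matrix (Fin (l / r)) (Fin l) 𝔽)
    (C : Fin r → Fin k → Matrix (Fin l) (Fin l) 𝔽)
    (hCinv : ∀ u j, IsUnit (C u j))
    (hC1 : ∀ j, C ⟨0, by omega⟩ j = 1)
    (hIA1 : ∀ (i j : Fin k), j ≠ i → ∀ u : Fin r,
      Submodule.span 𝔽 (Set.range (S i * C u j)) = Submodule.span 𝔽 (Set.range (S i)))
    (hIA2 : ∀ i : Fin k, iSupIndep
      fun u : Fin r => Submodule.span 𝔽 (Set.range (S i * C u i)))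
    (hIA3 : ∀ i : Fin k,
      (⨆ u : Fin r, Submodule.span 𝔽 (Set.range (S i * C u i))) = ⊤)
    (t : ℕ) (ht : t = r ^ 2 ⌈/⌉ l)
    (lam₀ : ℕ)
    (hlam₀ : if t = r then lam₀ = r
      else (lam₀ : ℤ) = t + 1 +
        ⌊Real.logb ((r : ℝ) / ((r : ℝ) - 1)) (((r : ℝ) - t) * l / r)⌋)
    (hlam₀k : lam₀ < k) :
    r ^ (k ⌈/⌉ lam₀) ≤ l ^ 2 ∧ (k : ℝ) ≤ 2 * lam₀ * Real.logb r l := by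
  classical
  set U : Fin k → Submodule 𝔽 (Fin l → 𝔽) := fun i => Submodule.span 𝔽 (Set.range (S i)) with hU
  set c : Fin r → Fin k → ((Fin l → 𝔽) →ₗ[𝔽] (Fin l → 𝔽)) :=
    fun u j => (C u j).vecMulLinear with hc
  obtain ⟨β, hβl⟩ := hrl
  have hr0 : 0 < r := by omega
  have hβ0 : 0 < β := by
    rcases Nat.eq_zero_or_pos β with h | h
    · subst h; omega
    · exact h
  have hdiv : l / r = β := by rw [hβl]; exact Nat.mul_div_cancel_left _ hr0
  simp only [MSRAux.span_mul] at hIA1 hIA2 hIA3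
  have hfix : ∀ i j, j ≠ i → ∀ u, ∀ x ∈ U i, c u j x ∈ U i := by
    intro i j hij u x hx
    have h := hIA1 i j hij u
    have : c u j x ∈ (U i).map (c u j) := Submodule.mem_map_of_mem hx
    exact h.le this
  have hinj : ∀ u j, Function.Injective (c u j) := fun u j =>
    Matrix.vecMul_injective_of_isUnit (hCinv u j)
  have hind : ∀ j, ∀ x : Fin r → (Fin l → 𝔽), (∀ u, x u ∈ U j) →
      ∑ u, c u j (x u) = 0 → ∀ u, x u = 0 := by
    intro j x hx h u
    have := (iSupIndep_iff_finsetSum_eq_zero_imp_eq_zero _).1 (hIA2 j) Finset.univ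
      (fun u => c u j (x u)) (fun u _ => Submodule.mem_map_of_mem (hx u)) h u (Finset.mem_univ _)
    exact hinj u j (by simpa using this)
  have hβ : ∀ j, Module.finrank 𝔽 (U j) = β := by
    intro j
    apply le_antisymm
    · have := finrank_range_le_card (R := 𝔽) (S j)
      rw [Fintype.card_fin] at this
      exact this.trans hdiv.le
    · have := MSRAux.count_ge (fun u => c u j) (U j) (hIA3 j)
      rw [Module.finrank_fin_fun] at this
      have := hβl.ge.trans this
      exact Nat.le_of_mul_le_mul_left this hr0
  have ht' : ∀ m < t, m * β < r := by
    intro m hm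
    by_contra h
    have h : r ≤ m * β := by omega
    have : t ≤ m := by
      rw [ht, ceilDiv_le_iff_le_mul hl, hβl]
      nlinarith
    omega
  have htr : t ≤ r := by
    rw [ht, ceilDiv_le_iff_le_mul hl, hβl]
    nlinarith
  have ht1 : 1 ≤ t := by
    by_contra h
    have h : t ≤ 0 := by omega
    rw [ht, ceilDiv_le_iff_le_mul hl] at h
    have : 0 < r ^ 2 := by positivity
    omega
  have hrR : (2 : ℝ) ≤ r := by exact_mod_cast hr
  have hlR : (l : ℝ) = r * β := by rw [hβl]; push_cast; ring
  have key : 0 < lam₀ ∧ ∀ A : Finset (Fin k), A.card = lam₀ → A.sup U = ⊤ := by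
    by_cases h : t = r
    · rw [if_pos h] at hlam₀
      refine ⟨by omega, fun A hA => ?_⟩
      apply Submodule.eq_top_of_finrank_eq
      rw [MSRAux.grow_small U c hfix hind hβ ht' A (by omega), Module.finrank_fin_fun, hβl, hA, hlam₀]
    · rw [if_neg h] at hlam₀
      have htr' : t + 1 ≤ r := by omega
      have htR : (t : ℝ) + 1 ≤ r := by exact_mod_cast htr'
      have hβR : (1 : ℝ) ≤ β := by exact_mod_cast hβ0
      have hX : ((r : ℝ) - t) * l / r = (r - t) * β := by
        rw [hlR]; field_simp
      rw [hX] at hlam₀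
      set X : ℝ := ((r : ℝ) - t) * β with hXdef
      have hX1 : 1 ≤ X := by nlinarith
      set b : ℝ := (r : ℝ) / (r - 1) with hb
      have hb1 : 1 < b := by
        rw [hb, lt_div_iff₀ (by linarith)]; linarith
      have hlog : 0 ≤ Real.logb b X := Real.logb_nonneg hb1 hX1
      have hfl : 0 ≤ ⌊Real.logb b X⌋ := Int.floor_nonneg.2 hlog
      obtain ⟨n, hn⟩ := Int.eq_ofNat_of_zero_le hfl
      have hlam : lam₀ = t + (n + 1) := by
        rw [hn] at hlam₀; omega
      refine ⟨by omega, fun A hA => ?_⟩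
      have hg := MSRAux.grow_large U c hfix hind hr hβ ht' (n + 1) A (by omega)
      have hlt : Real.logb b X < (n : ℝ) + 1 := by
        have := Int.lt_floor_add_one (Real.logb b X)
        rw [hn] at this
        exact_mod_cast this
      have hlt2 : X < b ^ (n + 1) := by
        rw [Real.logb_lt_iff_lt_rpow hb1 (by linarith)] at hlt
        rw [← Real.rpow_natCast]
        exact_mod_cast hlt
      have hbi : ((r : ℝ) - 1) / r = b⁻¹ := by rw [hb, inv_div]
      have hfin : (((r : ℝ) - 1) / r) ^ (n + 1) * ((r - t) * β) < 1 := by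
        rw [hbi, inv_pow, inv_mul_lt_iff₀ (by positivity), mul_one]
        exact hlt2
      have hlt3 : (r * β : ℝ) < Module.finrank 𝔽 (A.sup U : Submodule 𝔽 (Fin l → 𝔽)) + 1 := by
        linarith
      have hlt4 : r * β < Module.finrank 𝔽 (A.sup U : Submodule 𝔽 (Fin l → 𝔽)) + 1 := by
        exact_mod_cast hlt3
      apply Submodule.eq_top_of_finrank_eq
      apply le_antisymm (Submodule.finrank_le _)
      rw [Module.finrank_fin_fun]
      omega
  obtain ⟨hlam_pos, hspan⟩ := key
  have hmain : r ^ (k ⌈/⌉ lam₀) ≤ l ^ 2 := by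
    have hq : 0 < k ⌈/⌉ lam₀ := by
      by_contra h
      have h : k ⌈/⌉ lam₀ ≤ 0 := by omega
      rw [ceilDiv_le_iff_le_mul hlam_pos] at h
      omega
    obtain ⟨n, hn⟩ := Nat.exists_eq_succ_of_ne_zero hq.ne'
    have hnk : n * lam₀ < k := by
      by_contra h
      have : k ⌈/⌉ lam₀ ≤ n := by
        rw [ceilDiv_le_iff_le_mul hlam_pos]
        rw [mul_comm]; omega
      omega
    obtain ⟨A, -, hA⟩ := Finset.exists_subset_card_eq (s := (Finset.univ : Finset (Fin k)))
      (n := n * lam₀) (by simp; omega)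
    have hex : ∃ j, j ∉ A := by
      by_contra h
      push Not at h
      have : A = Finset.univ := Finset.eq_univ_iff_forall.2 h
      rw [this] at hA
      simp at hA
      omega
    obtain ⟨j, hj⟩ := hex
    have h1 := MSRAux.blocks U c hfix hind hspan n A hA
    have h2 := MSRAux.last U c hfix hind A j hj (by
      intro h
      have := hβ j
      rw [h] at this
      simp at this
      omega)
    rw [Module.finrank_fin_fun] at h1
    rw [hn, Nat.succ_eq_add_one, pow_succ]
    exact (Nat.mul_le_mul_left _ h2).trans h1
  refine ⟨hmain, ?_⟩
  have h1 : ((k ⌈/⌉ lam₀ : ℕ) : ℝ) ≤ 2 * Real.logb r l := by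
    have hlR0 : (0 : ℝ) < l := by exact_mod_cast hl
    have : ((r : ℝ)) ^ (k ⌈/⌉ lam₀) ≤ (l : ℝ) ^ 2 := by exact_mod_cast hmain
    have h2 := Real.logb_le_logb_of_le (b := r) (by linarith) (by positivity) this
    rw [Real.logb_pow, Real.logb_pow, Real.logb_self_eq_one (by linarith)] at h2
    simpa using h2
  have h2 : (k : ℝ) ≤ lam₀ * ((k ⌈/⌉ lam₀ : ℕ) : ℝ) := by
    have : k ≤ lam₀ * (k ⌈/⌉ lam₀) := (ceilDiv_le_iff_le_mul hlam_pos).1 le_rfl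
    exact_mod_cast this
  have h3 : (0 : ℝ) ≤ lam₀ := by positivity
  nlinarith
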